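/- Let d ≥ 1, let Σ and Δ be positive definite real d×d matrices with C the positive definite square root of Σ^{-1}, let μ, t ∈ ℝ^d and r ∈ {0,1}^d, and let f_Δ(x) = (2π)^{-d/2} (det Δ)^{-1/2} exp(-(1/2) xᵀ Δ^{-1} x) be the density of N_d(0,Δ). Define g̃((x,r), t) = cos(⟨t, C((x-μ) ⊙ r)⟩) + sin(⟨t, C((x-μ) ⊙ r)⟩) - exp(-‖t‖²/2). Then ∫_{ℝ^d} g̃((x,r), t) f_Δ(x) dx = ( cos(⟨t, C(μ ⊙ r)⟩) - sin(⟨t, C(μ ⊙ r)⟩) ) · exp(-(1/2) ((Ct) ⊙ r)ᵀ Δ ((Ct) ⊙ r)) - exp(-‖t‖²/2). -/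

import Mathlib

open MeasureTheory Real Matrix

/-- Density of the `N_d(0, Δ)` distribution:
`f_Δ(x) = (2π)^{-d/2} (det Δ)^{-1/2} exp(-(1/2) xᵀ Δ⁻¹ x)`. -/
noncomputable def normalDensity (d : ℕ) (Δ : Matrix (Fin d) (Fin d) ℝ) (x : Fin d → ℝ) : ℝ :=
  (2 * π) ^ (-(d : ℝ) / 2) * (Δ.det) ^ (-(1 : ℝ) / 2)
    * Real.exp (-(1 / 2) * (x ⬝ᵥ (Δ⁻¹ *ᵥ x)))

/-- Componentwise (Hadamard–Schur) product of vectors. -/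
def hadamard {d : ℕ} (a b : Fin d → ℝ) : Fin d → ℝ := fun i => a i * b i

/-- The imputed BHEP integrand
`g̃((x,r),t) = cos⟨t, C((x-μ)⊙r)⟩ + sin⟨t, C((x-μ)⊙r)⟩ - exp(-‖t‖²/2)` with `C = Σ^{-1/2}`. -/
noncomputable def bhepGImp (d : ℕ) (C : Matrix (Fin d) (Fin d) ℝ) (μ : Fin d → ℝ)
    (x r t : Fin d → ℝ) : ℝ :=
  Real.cos (∑ i, t i * (C *ᵥ hadamard (x - μ) r) i)
    + Real.sin (∑ i, t i * (C *ᵥ hadamard (x - μ) r) i)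
    - Real.exp (-(∑ i, t i ^ 2) / 2)

section LinearChangeOfVariables

variable {ι E : Type*} [Fintype ι] [DecidableEq ι] [NormedAddCommGroup E]
  {A : Matrix ι ι ℝ}

theorem Matrix.measurableEmbedding_mulVec (hA : A.det ≠ 0) :
    MeasurableEmbedding (fun v : ι → ℝ => A *ᵥ v) := by
  have hinj : Function.Injective (fun v : ι → ℝ => A *ᵥ v) :=
    mulVec_injective_of_isUnit ((isUnit_iff_isUnit_det A).2 hA.isUnit)
  exact (LinearMap.isClosedEmbedding_of_injective (f := toLin' A)
    (LinearMap.ker_eq_bot.2 hinj)).measurableEmbedding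

theorem Matrix.map_mulVec_volume (hA : A.det ≠ 0) :
    (volume : Measure (ι → ℝ)).map (fun v => A *ᵥ v)
      = ENNReal.ofReal |A.det⁻¹| • volume :=
  Real.map_matrix_volume_pi_eq_smul_volume_pi hA

theorem Matrix.integrable_comp_mulVec_iff (hA : A.det ≠ 0) (f : (ι → ℝ) → E) :
    Integrable (fun v => f (A *ᵥ v)) ↔ Integrable f := by
  have h := (measurableEmbedding_mulVec hA).integrable_map_iff (μ := volume) (g := f)
  rw [map_mulVec_volume hA, integrable_smul_measure (by simpa using hA) ENNReal.ofReal_ne_top]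
    at h
  exact h.symm

theorem Matrix.integral_comp_mulVec [NormedSpace ℝ E] (hA : A.det ≠ 0) (f : (ι → ℝ) → E) :
    ∫ v, f (A *ᵥ v) = |A.det|⁻¹ • ∫ x, f x := by
  rw [← (measurableEmbedding_mulVec hA).integral_map, map_mulVec_volume hA,
    integral_smul_measure, ENNReal.toReal_ofReal (abs_nonneg _), abs_inv]

end LinearChangeOfVariables

open scoped MatrixOrder in
theorem Matrix.PosDef.exists_eq_mul_transpose {ι : Type*} [Fintype ι] [DecidableEq ι]
    {Δ : Matrix ι ι ℝ} (hΔ : Δ.PosDef) :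
    ∃ A : Matrix ι ι ℝ, A.det ≠ 0 ∧ Δ = A * Aᵀ := by
  obtain ⟨B, hB⟩ := CStarAlgebra.nonneg_iff_eq_star_mul_self.mp hΔ.posSemidef.nonneg
  have hB' : Δ = Bᵀ * B := by
    rw [hB, star_eq_conjTranspose, conjTranspose_eq_transpose_of_trivial]
  refine ⟨Bᵀ, fun h => hΔ.det_pos.ne' ?_, by rw [transpose_transpose, hB']⟩
  rw [hB', det_mul, h, zero_mul]

section NormalDensity

variable {d : ℕ} {A : Matrix (Fin d) (Fin d) ℝ}

theorem normalDensity_mulVec (hA : A.det ≠ 0) (v : Fin d → ℝ) :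
    normalDensity d (A * Aᵀ) (A *ᵥ v)
      = (2 * π) ^ (-(d : ℝ) / 2) * |A.det|⁻¹ * Real.exp (-(1 / 2) * ∑ i, v i ^ 2) := by
  have hu : IsUnit A.det := hA.isUnit
  have hut : IsUnit Aᵀ.det := by rwa [det_transpose]
  have hquad : (A *ᵥ v) ⬝ᵥ ((A * Aᵀ)⁻¹ *ᵥ (A *ᵥ v)) = ∑ i, v i ^ 2 := by
    rw [Matrix.mul_inv_rev, mulVec_mulVec, Matrix.mul_assoc, nonsing_inv_mul _ hu,
      Matrix.mul_one, ← vecMul_transpose, ← dotProduct_mulVec, mulVec_mulVec,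
      mul_nonsing_inv _ hut, one_mulVec]
    simp [dotProduct, sq]
  have hdet : (A * Aᵀ).det ^ (-(1 : ℝ) / 2) = |A.det|⁻¹ := by
    rw [det_mul, det_transpose, neg_div, Real.rpow_neg (mul_self_nonneg _), ← Real.sqrt_eq_rpow,
      Real.sqrt_mul_self_eq_abs]
  rw [normalDensity, hquad, hdet]

theorem cexp_mul_normalDensity_mulVec (hA : A.det ≠ 0) (w v : Fin d → ℝ) :
    Complex.exp (Complex.I * (w ⬝ᵥ (A *ᵥ v) : ℝ)) * (normalDensity d (A * Aᵀ) (A *ᵥ v) : ℂ)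
      = (((2 * π) ^ (-(d : ℝ) / 2) * |A.det|⁻¹ : ℝ) : ℂ)
        * Complex.exp (-(1 / 2 : ℂ) * ∑ i, (v i : ℂ) ^ 2
          + ∑ i, (Complex.I * ((w ᵥ* A) i : ℂ)) * v i) := by
  rw [normalDensity_mulVec hA, dotProduct_mulVec, Complex.exp_add]
  simp only [dotProduct, mul_assoc, ← Finset.mul_sum]
  push_cast
  ring

variable {Δ : Matrix (Fin d) (Fin d) ℝ}

theorem integrable_cexp_mul_normalDensity (hΔ : Δ.PosDef) (w : Fin d → ℝ) :
    Integrable fun x : Fin d → ℝ =>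
      Complex.exp (Complex.I * (w ⬝ᵥ x : ℝ)) * (normalDensity d Δ x : ℂ) := by
  obtain ⟨A, hA, rfl⟩ := hΔ.exists_eq_mul_transpose
  rw [← integrable_comp_mulVec_iff hA]
  simp only [cexp_mul_normalDensity_mulVec hA]
  exact (GaussianFourier.integrable_cexp_neg_mul_sum_add (by norm_num) _).const_mul _

/-- The characteristic function of the centred normal distribution with covariance `Δ`. -/
theorem integral_cexp_mul_normalDensity (hΔ : Δ.PosDef) (w : Fin d → ℝ) :
    ∫ x : Fin d → ℝ, Complex.exp (Complex.I * (w ⬝ᵥ x : ℝ)) * (normalDensity d Δ x : ℂ)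
      = (Real.exp (-(1 / 2) * (w ⬝ᵥ (Δ *ᵥ w))) : ℂ) := by
  obtain ⟨A, hA, rfl⟩ := hΔ.exists_eq_mul_transpose
  have habs : |A.det| ≠ 0 := abs_ne_zero.2 hA
  have hquad : w ⬝ᵥ ((A * Aᵀ) *ᵥ w) = ∑ i, (w ᵥ* A) i ^ 2 := by
    rw [← mulVec_mulVec, dotProduct_mulVec, mulVec_transpose]
    simp [dotProduct, sq]
  have hconst : ((π : ℂ) / (1 / 2)) ^ ((Fintype.card (Fin d) : ℂ) / 2)
      = (((2 * π) ^ ((d : ℝ) / 2) : ℝ) : ℂ) := by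
    rw [Complex.ofReal_cpow (by positivity), Fintype.card_fin]
    push_cast
    congr 1
    ring
  have hpow : (2 * π) ^ (-(d : ℝ) / 2) * (2 * π) ^ ((d : ℝ) / 2) = 1 := by
    rw [← Real.rpow_add (by positivity), neg_div, neg_add_cancel, Real.rpow_zero]
  have hsum : (∑ i, (Complex.I * ((w ᵥ* A) i : ℂ)) ^ 2) / (4 * (1 / 2))
      = ((-(1 / 2) * ∑ i, (w ᵥ* A) i ^ 2 : ℝ) : ℂ) := by
    simp only [mul_pow, Complex.I_sq, ← Finset.mul_sum]
    push_cast
    ring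
  have h := integral_comp_mulVec hA fun x : Fin d → ℝ =>
    Complex.exp (Complex.I * (w ⬝ᵥ x : ℝ)) * (normalDensity d (A * Aᵀ) x : ℂ)
  simp only [cexp_mul_normalDensity_mulVec hA] at h
  rw [integral_const_mul, GaussianFourier.integral_cexp_neg_mul_sum_add (by norm_num), hconst,
    hsum, ← Complex.ofReal_exp, ← hquad, Complex.real_smul, ← mul_assoc, ← Complex.ofReal_mul,
    mul_right_comm, hpow, one_mul] at h
  exact (mul_left_cancel₀ (Complex.ofReal_ne_zero.2 (inv_ne_zero habs)) h).symm

end NormalDensity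

theorem sum_mul_mulVec_hadamard {d : ℕ} {C : Matrix (Fin d) (Fin d) ℝ} (hC : C.IsSymm)
    (t x r : Fin d → ℝ) :
    ∑ i, t i * (C *ᵥ hadamard x r) i = hadamard (C *ᵥ t) r ⬝ᵥ x := by
  change t ⬝ᵥ (C *ᵥ hadamard x r) = _
  rw [dotProduct_mulVec, ← mulVec_transpose, hC.eq]
  simp only [dotProduct, _root_.hadamard]
  exact Finset.sum_congr rfl fun i _ => by ring

theorem cos_sub_add_sin_sub_eq_re (θ a : ℝ) :
    Real.cos (θ - a) + Real.sin (θ - a)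
      = ((1 - Complex.I) * Complex.exp (-(Complex.I * a)) * Complex.exp (Complex.I * θ)).re := by
  rw [mul_assoc, ← Complex.exp_add,
    show -(Complex.I * a) + Complex.I * θ = ((θ - a : ℝ) : ℂ) * Complex.I by push_cast; ring,
    Complex.exp_mul_I, ← Complex.ofReal_cos, ← Complex.ofReal_sin]
  simp [-Complex.ofReal_cos, -Complex.ofReal_sin]

/-- Conditional expectation of the imputed BHEP integrand under `X ~ N_d(0,Δ)`:
`∫ g̃((x,r),t) f_Δ(x) dx = (cos⟨t, C(μ⊙r)⟩ - sin⟨t, C(μ⊙r)⟩)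
  · exp(-(1/2)((Ct)⊙r)ᵀ Δ ((Ct)⊙r)) - exp(-‖t‖²/2)`,
where `C` is the positive definite square root of `Σ⁻¹`. -/
theorem imputed_bhep_conditional_expectation (d : ℕ) (hd : 1 ≤ d)
    (S Δ : Matrix (Fin d) (Fin d) ℝ) (hS : S.PosDef) (hΔ : Δ.PosDef)
    (C : Matrix (Fin d) (Fin d) ℝ) (hC : C.PosDef) (hCsq : C * C = S⁻¹)
    (μ t : Fin d → ℝ) (r : Fin d → ℝ) (hr : ∀ i, r i = 0 ∨ r i = 1) :
    (∫ x : Fin d → ℝ, bhepGImp d C μ x r t * normalDensity d Δ x)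
      = (Real.cos (∑ i, t i * (C *ᵥ hadamard μ r) i)
          - Real.sin (∑ i, t i * (C *ᵥ hadamard μ r) i))
        * Real.exp (-(1 / 2) * (hadamard (C *ᵥ t) r ⬝ᵥ (Δ *ᵥ hadamard (C *ᵥ t) r)))
        - Real.exp (-(∑ i, t i ^ 2) / 2) := by
  have hsymm : C.IsSymm := by
    have h := hC.isHermitian.eq
    rwa [conjTranspose_eq_transpose_of_trivial] at h
  set w := hadamard (C *ᵥ t) r with hw
  set a := ∑ i, t i * (C *ᵥ hadamard μ r) i with ha
  set e := Real.exp (-(∑ i, t i ^ 2) / 2) with he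
  set k : ℂ := (1 - Complex.I) * Complex.exp (-(Complex.I * a)) with hk
  have hint : ∀ x : Fin d → ℝ, bhepGImp d C μ x r t * normalDensity d Δ x
      = RCLike.re (k * (Complex.exp (Complex.I * (w ⬝ᵥ x : ℝ)) * (normalDensity d Δ x : ℂ))
        - (e : ℂ) * (Complex.exp (Complex.I * ((0 : Fin d → ℝ) ⬝ᵥ x : ℝ))
          * (normalDensity d Δ x : ℂ))) := by
    intro x
    rw [bhepGImp, sum_mul_mulVec_hadamard hsymm, dotProduct_sub, ← hw,
      show w ⬝ᵥ μ = a from (sum_mul_mulVec_hadamard hsymm t μ r).symm,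
      cos_sub_add_sin_sub_eq_re, ← hk, ← he]
    simp only [zero_dotProduct, Complex.ofReal_zero, mul_zero, Complex.exp_zero, one_mul,
      ← mul_assoc, ← sub_mul, RCLike.re_eq_complex_re, Complex.re_mul_ofReal, Complex.sub_re,
      Complex.ofReal_re]
  have hI := fun w => integrable_cexp_mul_normalDensity hΔ w
  have hre := integral_re (((hI w).const_mul k).sub ((hI 0).const_mul (e : ℂ)))
  simp only [Pi.sub_apply] at hre
  simp only [hint]
  rw [hre, integral_sub ((hI w).const_mul k) ((hI 0).const_mul (e : ℂ)), integral_const_mul,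
    integral_const_mul, integral_cexp_mul_normalDensity hΔ, integral_cexp_mul_normalDensity hΔ]
  have hkre : k.re = Real.cos a - Real.sin a := by
    have h := cos_sub_add_sin_sub_eq_re 0 a
    simp only [zero_sub, Real.cos_neg, Real.sin_neg, Complex.ofReal_zero, mul_zero,
      Complex.exp_zero, mul_one, ← hk] at h
    rw [← h, sub_eq_add_neg]
  simp only [zero_dotProduct, mul_zero, Real.exp_zero, Complex.ofReal_one, mul_one,
    RCLike.re_eq_complex_re, Complex.sub_re, Complex.re_mul_ofReal, Complex.ofReal_re, hkre]
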